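/- Let N : ℝⁿ → ℝⁿ be continuous, let X_in ⊆ ℝⁿ be a compact input set on which N is injective (so that N restricted to X_in is a homeomorphism onto its image N''(X_in)), and let X_s ⊆ ℝⁿ be a set whose complement ℝⁿ \ X_s is connected and unbounded. If N''(∂X_in) ⊆ X_s, then N''(X_in) ⊆ X_s; that is, verifying that the image of the boundary of the input set lies in the safe set suffices to conclude that the image of the entire input set lies in the safe set. -/

import Mathlib

/-!
Write `C` for the complement of `Xs`. The boundary hypothesis says that `C` meets `N '' Xin` only in
images of interior points of `Xin`, and by invariance of domain these are interior points of
`N '' Xin`. Since `N '' Xin` is also closed, connectedness of `C` forces either `C ⊆ N '' Xin`, which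
is impossible because `C` is unbounded and `N '' Xin` compact, or `C` disjoint from `N '' Xin`.

Invariance of domain is proved here in three stages.

* There is no `C¹` map of `ℝⁿ` into the unit sphere fixing the sphere pointwise (`no_retraction`),
  by the volume argument of Milnor and Rogers. With `g = R - id` on the unit ball `U`, the map
  `id + t g` is a bijection of `U` for small `t ≥ 0`, so `∫_U det (1 + t g')` equals the volume
  of `U` for these `t`. The integrand is a polynomial in `t` of degree at most `n`, so by Lagrange
  interpolation the integral has the same value at `t = 1`. There it is zero, because `R'` is
  singular when `‖R‖` is constant.
* A continuous map of the closed unit ball within distance `1 / 2` of the identity has a zero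
  (`exists_zero_of_near_id`): otherwise a smooth approximation, interpolated to the identity near
  the sphere and normalised, would contradict `no_retraction`.
* An injective continuous `f` on the closed ball maps the centre into the interior of the image
  (`mem_interior_image_closedBall`), following Kulpa's argument in the form given by Tao: otherwise a
  continuous extension `G` of `f⁻¹` could be perturbed on the image of `f` so as to lose its zero,
  against the previous point applied to the perturbation composed with `f`.
-/

open Set Metric MeasureTheory Filter Topology

/-- `ℝⁿ` with the Euclidean norm. The retraction argument differentiates `‖R x‖ ^ 2`, which the sup
norm of `Fin n → ℝ` does not allow. -/
abbrev Euc (n : ℕ) : Type := EuclideanSpace ℝ (Fin n)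

/-! ### The no-retraction theorem -/

/-- `t ↦ det (1 + t A)` is a polynomial of degree at most `n`, so its value at `1` is a combination
of its values at more than `n` nodes, with weights that do not depend on `A`. -/
theorem det_one_add_smul_interp {n : ℕ} (s : Finset ℝ) (hs : n < s.card)
    (A : Euc n →L[ℝ] Euc n) :
    (ContinuousLinearMap.id ℝ _ + A).det =
      ∑ t ∈ s, (Lagrange.basis s id t).eval 1 * (ContinuousLinearMap.id ℝ _ + t • A).det := by
  classical
  set b := (EuclideanSpace.basisFun (Fin n) ℝ).toBasis
  set M := LinearMap.toMatrix b b A.toLinearMap with hM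
  set p : Polynomial ℝ :=
    Matrix.det ((Polynomial.X : Polynomial ℝ) • M.map Polynomial.C
      + (1 : Matrix (Fin n) (Fin n) ℝ).map Polynomial.C) with hp
  have hev (t : ℝ) : p.eval t = (ContinuousLinearMap.id ℝ _ + t • A).det := by
    rw [ContinuousLinearMap.det, ← LinearMap.det_toMatrix b, hp, ← Polynomial.coe_evalRingHom,
      RingHom.map_det]
    congr 1
    have : (LinearMap.toMatrix b b) (ContinuousLinearMap.id ℝ (Euc n) + t • A).toLinearMap
        = 1 + t • M := by
      rw [hM, ← LinearMap.toMatrix_id b, ← map_smul, ← map_add]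
      rfl
    rw [this]
    ext i j
    simp only [Polynomial.coe_evalRingHom, RingHom.mapMatrix_apply, Matrix.map_apply,
      Matrix.add_apply, Matrix.smul_apply, Matrix.one_apply, smul_eq_mul]
    rw [add_comm, mul_comm]
    split_ifs <;> simp [mul_comm t]
  have hdeg : p.degree < s.card := by
    refine lt_of_le_of_lt Polynomial.degree_le_natDegree ?_
    have := Polynomial.natDegree_det_X_add_C_le M 1
    rw [Fintype.card_fin] at this
    exact_mod_cast this.trans_lt hs
  have h := Lagrange.eq_interpolate (v := id) Function.injective_id.injOn hdeg
  have h1 := congrArg (Polynomial.eval 1) h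
  rw [Lagrange.interpolate_apply, Polynomial.eval_finsetSum, hev, one_smul] at h1
  rw [h1]
  refine Finset.sum_congr rfl fun t _ => ?_
  simp [hev, mul_comm]

/-- `det (1 + s A)` has no zero for `s` in `[0, t]`, and equals `1` at `s = 0`. -/
theorem det_id_add_smul_pos {n : ℕ} {A : Euc n →L[ℝ] Euc n}
    {K t : ℝ} (hA : ‖A‖ ≤ K) (ht : 0 ≤ t) (htK : t * K < 1) :
    0 < (ContinuousLinearMap.id ℝ _ + t • A).det := by
  have hne : ∀ s ∈ Icc 0 t, (ContinuousLinearMap.id ℝ _ + s • A).det ≠ 0 := by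
    intro s hs h0
    have h0' : LinearMap.det (ContinuousLinearMap.id ℝ (Euc n) + s • A).toLinearMap = 0 := h0
    obtain ⟨v, hv, hv0⟩ := Submodule.exists_mem_ne_zero_of_ne_bot (LinearMap.bot_lt_ker_of_det_eq_zero h0').ne'
    have e : v + s • A v = 0 := by simpa using hv
    have : ‖v‖ ≤ t * K * ‖v‖ := calc
      ‖v‖ = ‖s • A v‖ := by nth_rw 1 [eq_neg_of_add_eq_zero_left e]; rw [norm_neg]
      _ = s * ‖A v‖ := by rw [norm_smul, Real.norm_of_nonneg hs.1]
      _ ≤ t * (K * ‖v‖) := mul_le_mul hs.2 (A.le_of_opNorm_le hA v) (norm_nonneg _) ht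
      _ = _ := by ring
    have := norm_pos_iff.2 hv0
    nlinarith
  by_contra! hcon
  have hc : ContinuousOn (fun s : ℝ => (ContinuousLinearMap.id ℝ (Euc n) + s • A).det) (Icc 0 t) :=
    (ContinuousLinearMap.continuous_det.comp (by fun_prop)).continuousOn
  have := intermediate_value_Icc' ht hc
  obtain ⟨s, hs, hs0⟩ := this (show (0:ℝ) ∈ _ from ⟨hcon, by simp [ContinuousLinearMap.det]⟩)
  exact hne s hs hs0

/-- A Lipschitz map on the unit ball that vanishes on the sphere stays Lipschitz, with the same
constant, when extended by zero: a segment leaving the ball crosses the sphere. -/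
theorem lipschitz_cutoff {E : Type*} [NormedAddCommGroup E] [NormedSpace ℝ E] {g : E → E} {K : NNReal}
    (hg : LipschitzOnWith K g (closedBall 0 1)) (h0 : ∀ x, ‖x‖ = 1 → g x = 0) :
    LipschitzWith K ((closedBall 0 1).indicator g) := by
  have key : ∀ x ∈ closedBall (0 : E) 1, ∀ y ∉ closedBall (0 : E) 1, dist (g x) 0 ≤ K * dist x y := by
    intro x hx y hy
    have hc : ContinuousOn (fun t : ℝ => ‖AffineMap.lineMap x y t‖) (Icc 0 1) := by fun_prop
    have hx' : ‖x‖ ≤ 1 := by simpa using hx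
    have hy' : 1 < ‖y‖ := by simpa using hy
    obtain ⟨t, ht, hz⟩ := intermediate_value_Icc zero_le_one hc
      (show (1:ℝ) ∈ _ from ⟨by simpa using hx', by simpa using hy'.le⟩)
    have hz' : ‖AffineMap.lineMap x y t‖ = 1 := hz
    have hm : AffineMap.lineMap x y t ∈ closedBall (0 : E) 1 := by simp [hz']
    have := hg.dist_le_mul x hx _ hm
    rw [h0 _ hz', dist_left_lineMap, Real.norm_of_nonneg ht.1] at this
    refine this.trans ?_
    gcongr
    exact mul_le_of_le_one_left dist_nonneg ht.2
  refine LipschitzWith.of_dist_le_mul fun x y => ?_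
  by_cases hx : x ∈ closedBall (0 : E) 1 <;> by_cases hy : y ∈ closedBall (0 : E) 1
  · simpa only [indicator_of_mem hx, indicator_of_mem hy] using hg.dist_le_mul x hx y hy
  · simpa only [indicator_of_mem hx, indicator_of_notMem hy] using key x hx y hy
  · rw [dist_comm, dist_comm x]
    simpa only [indicator_of_mem hy, indicator_of_notMem hx] using key y hy x hx
  · rw [indicator_of_notMem hx, indicator_of_notMem hy, dist_self]; positivity

/-- A small Lipschitz perturbation of the identity is a bijection of the whole space (surjectivity is
the contraction principle); being the identity off the ball, it permutes the ball. -/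
theorem bijOn_ball {E : Type*} [NormedAddCommGroup E] [NormedSpace ℝ E] [CompleteSpace E] {h : E → E} {K : NNReal}
    (hh : LipschitzWith K h) (h0 : ∀ x ∉ ball (0 : E) 1, h x = 0) {t : ℝ} (ht : 0 ≤ t)
    (htK : t * K < 1) : BijOn (fun x => x + t • h x) (ball 0 1) (ball 0 1) := by
  have hL : ∀ y, ContractingWith (Real.toNNReal t * K) (fun x => y - t • h x) := by
    refine fun y => ⟨?_, ?_⟩
    · rw [← NNReal.coe_lt_coe]; simpa [ht] using htK
    · refine LipschitzWith.of_dist_le_mul fun a b => ?_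
      rw [dist_sub_left, dist_smul₀, Real.norm_of_nonneg ht]
      have := hh.dist_le_mul a b
      simp only [NNReal.coe_mul, Real.coe_toNNReal t ht]
      nlinarith
  have hinj : Function.Injective (fun x => x + t • h x) := by
    intro a b hab
    have hab' : a + t • h a = b + t • h b := hab
    refine ((hL (a + t • h a)).fixedPoint_unique' (x := a) (y := b) ?_ ?_)
    · simp [Function.IsFixedPt]
    · simp [Function.IsFixedPt, hab']
  refine ⟨fun x hx => ?_, hinj.injOn, fun y hy => ?_⟩
  · by_contra hy
    have : x = x + t • h x := hinj (by simp [h0 _ hy])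
    exact hy (this ▸ hx :)
  · have hfix := (hL y).fixedPoint_isFixedPt
    set x := ContractingWith.fixedPoint _ (hL y)
    have e : x + t • h x = y := by rw [← eq_sub_iff_add_eq]; exact hfix.symm
    refine ⟨x, ?_, e⟩
    by_contra hx
    rw [h0 x hx, smul_zero, add_zero] at e
    exact hx (e ▸ hy)

theorem no_retraction {n : ℕ} {R : Euc n → Euc n}
    (hR : ContDiff ℝ 1 R) (hnorm : ∀ x, ‖R x‖ = 1) (hfix : ∀ x, ‖x‖ = 1 → R x = x) : False := by
  set g : Euc n → Euc n := fun x => R x - x with hg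
  have hgC : ContDiff ℝ 1 g := hR.sub contDiff_id
  have hg0 : ∀ x, ‖x‖ = 1 → g x = 0 := fun x hx => by simp [hg, hfix x hx]
  obtain ⟨K, hK⟩ := hgC.contDiffOn.exists_lipschitzOnWith one_ne_zero
    (convex_closedBall (0 : Euc n) 1) (isCompact_closedBall 0 1)
  have hgd (x : Euc n) : HasFDerivAt g (fderiv ℝ g x) x :=
    (hgC.differentiable one_ne_zero x).hasFDerivAt
  have hh := lipschitz_cutoff hK hg0
  have hh0 : ∀ x ∉ ball (0 : Euc n) 1, (closedBall (0 : Euc n) 1).indicator g x = 0 := by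
    intro x hx
    by_cases hx' : x ∈ closedBall (0 : Euc n) 1
    · rw [indicator_of_mem hx']
      refine hg0 x (le_antisymm (by simpa using hx') (by simpa using hx))
    · rw [indicator_of_notMem hx']
  have hnK : ∀ x ∈ ball (0 : Euc n) 1, ‖fderiv ℝ g x‖ ≤ K := fun x hx =>
    norm_fderiv_le_of_lipschitzOn ℝ (closedBall_mem_nhds_of_mem hx) hK
  have hcont (t : ℝ) : Continuous fun x => (ContinuousLinearMap.id ℝ (Euc n) + t • fderiv ℝ g x).det :=
    ContinuousLinearMap.continuous_det.comp
      (continuous_const.add ((hgC.continuous_fderiv one_ne_zero).const_smul t))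
  have hint (t : ℝ) : IntegrableOn (fun x => (ContinuousLinearMap.id ℝ (Euc n) + t • fderiv ℝ g x).det)
      (ball 0 1) volume :=
    ((hcont t).continuousOn.integrableOn_compact (isCompact_closedBall 0 1)).mono_set
      ball_subset_closedBall
  have hvol : ∀ t : ℝ, 0 ≤ t → t * K < 1 →
      ∫ x in ball (0 : Euc n) 1, (ContinuousLinearMap.id ℝ (Euc n) + t • fderiv ℝ g x).det
        = volume.real (ball (0 : Euc n) 1) := by
    intro t ht htK
    have hb := bijOn_ball hh hh0 ht htK
    have hb' : BijOn (fun x => x + t • g x) (ball (0 : Euc n) 1) (ball 0 1) :=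
      hb.congr fun x hx => by simp [indicator_of_mem (ball_subset_closedBall hx)]
    have := integral_image_eq_integral_abs_det_fderiv_smul volume
      (measurableSet_ball (x := (0 : Euc n)) (ε := 1))
      (fun x _ => ((hasFDerivAt_id x).add ((hgd x).const_smul t)).hasFDerivWithinAt)
      hb'.injOn (fun _ => (1 : ℝ))
    have him : ((id + t • g) '' ball (0:Euc n) 1) = ball 0 1 := hb'.image_eq
    rw [him] at this
    simp only [smul_eq_mul, mul_one, integral_const, MeasurableSet.univ, measureReal_restrict_apply, univ_inter] at this
    rw [this]
    refine setIntegral_congr_fun measurableSet_ball fun x hx => ?_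
    exact (abs_of_pos (det_id_add_smul_pos (hnK x hx) ht htK)).symm
  have hdet0 : ∀ x, (ContinuousLinearMap.id ℝ (Euc n) + fderiv ℝ g x).det = 0 := by
    intro x
    have hd : fderiv ℝ g x = fderiv ℝ R x - ContinuousLinearMap.id ℝ (Euc n) := 
      ((hR.differentiable one_ne_zero x).hasFDerivAt.sub (hasFDerivAt_id x)).fderiv
    rw [hd, add_sub_cancel]
    by_contra hne
    have hu : IsUnit (LinearMap.det (fderiv ℝ R x).toLinearMap) := isUnit_iff_ne_zero.2 hne
    have hs : Function.Surjective (fderiv ℝ R x).toLinearMap := 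
      ((LinearMap.isUnit_iff_isUnit_det _).2 hu |> (Module.End.isUnit_iff _).1).2
    -- A preimage `v` of `R x` would make the derivative of `‖R‖ ^ 2` along `v` equal to `2`.
    obtain ⟨v, hv⟩ := hs (R x)
    have hd := ((hR.differentiable one_ne_zero x).hasFDerivAt.norm_sq)
    have hc : HasFDerivAt (fun y => ‖R y‖ ^ 2) (0 : Euc n →L[ℝ] ℝ) x := by
      simp only [hnorm]; exact hasFDerivAt_const _ _
    have := DFunLike.congr_fun (hd.unique hc) v
    have hv' : fderiv ℝ R x v = R x := hv
    simp [hv', hnorm] at this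
  -- The interpolation nodes lie in the range of `t` where `hvol` applies.
  obtain ⟨s, hs, hsc⟩ := (Icc_infinite (show (0:ℝ) < 1 / (K + 1) by positivity)).exists_subset_card_eq (n + 1)
  have hsum : ∑ t ∈ s, (Lagrange.basis s id t).eval (1 : ℝ) = 1 := by
    rw [← Polynomial.eval_finsetSum, Lagrange.sum_basis Function.injective_id.injOn
      (Finset.card_pos.1 (by omega)), Polynomial.eval_one]
  have h0 : (0 : ℝ) = volume.real (ball (0 : Euc n) 1) := calc
    (0 : ℝ) = ∫ x in ball (0 : Euc n) 1, (ContinuousLinearMap.id ℝ (Euc n) + fderiv ℝ g x).det := by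
      simp [hdet0]
    _ = ∫ x in ball (0 : Euc n) 1, ∑ t ∈ s, (Lagrange.basis s id t).eval 1 *
          (ContinuousLinearMap.id ℝ (Euc n) + t • fderiv ℝ g x).det := by
      exact integral_congr_ae (.of_forall fun x => det_one_add_smul_interp s (by omega) _)
    _ = ∑ t ∈ s, (Lagrange.basis s id t).eval 1 * volume.real (ball (0 : Euc n) 1) := by
      rw [integral_finsetSum _ fun t _ => (hint t).const_mul _]
      refine Finset.sum_congr rfl fun t ht => ?_
      have ht' := hs ht
      rw [integral_const_mul, hvol t ht'.1]
      calc t * K ≤ 1 / (K + 1) * K := by gcongr; exact ht'.2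
        _ < 1 := by rw [one_div_mul_eq_div, div_lt_one (by positivity)]; linarith
    _ = _ := by rw [← Finset.sum_mul, hsum, one_mul]
  have : 0 < volume.real (ball (0 : Euc n) 1) :=
    ENNReal.toReal_pos (measure_ball_pos _ _ one_pos).ne' measure_ball_lt_top.ne
  linarith

/-! ### Zeros of maps close to the identity -/

/-- A form of Brouwer's fixed point theorem. -/
theorem exists_zero_of_near_id {n : ℕ} {F : Euc n → Euc n}
    (hF : ContinuousOn F (closedBall 0 1)) (hFx : ∀ x ∈ closedBall 0 1, ‖F x - x‖ ≤ 1 / 2) :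
    ∃ x ∈ closedBall 0 1, F x = 0 := by
  by_contra! hne
  obtain ⟨F', hF'⟩ := ContinuousMap.exists_restrict_eq (isClosed_closedBall (x := (0 : Euc n)) (ε := 1))
    ⟨_, continuousOn_iff_continuous_domRestrict.1 hF⟩
  have hF'F : ∀ x ∈ closedBall (0 : Euc n) 1, F' x = F x := fun x hx =>
    DFunLike.congr_fun hF' ⟨x, hx⟩
  obtain ⟨δ, hδ, hδF⟩ := (isCompact_closedBall (0 : Euc n) 1).exists_forall_le' hF.norm
    (a := 0) fun x hx => norm_pos_iff.2 (hne x hx)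
  obtain ⟨P, hP, hPF, -⟩ := F'.continuous.exists_contDiff_approx 1 (ε := fun _ => min δ (1 / 4))
    continuous_const fun _ => by positivity
  have hPF' : ∀ x ∈ closedBall (0 : Euc n) 1, ‖P x - F x‖ < min δ (1 / 4) := fun x hx => by
    rw [← hF'F x hx, ← dist_eq_norm]; exact hPF x
  have hPx : ∀ x ∈ closedBall (0 : Euc n) 1, ‖P x - x‖ < 3 / 4 := fun x hx => by
    have h1 := (hPF' x hx).trans_le (min_le_right _ _)
    have h2 := hFx x hx
    have h3 := norm_sub_le_norm_sub_add_norm_sub (P x) (F x) x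
    linarith
  -- `P` is nonzero on the ball and within `3 / 4` of the identity, so `H` below cannot vanish: the
  -- transition from `P` to the identity takes place where `‖x‖ ≥ 4 / 5 > 3 / 4`.
  let χ : ContDiffBump (0 : Euc n) := ⟨4 / 5, 9 / 10, by norm_num, by norm_num⟩
  set H : Euc n → Euc n := fun x => x + χ x • (P x - x) with hH
  have hHC : ContDiff ℝ 1 H := contDiff_id.add (χ.contDiff.smul (hP.sub contDiff_id))
  have hHout : ∀ x, 9 / 10 ≤ ‖x‖ → H x = x := fun x hx => by
    simp [hH, χ.zero_of_le_dist (show (9 / 10 : ℝ) ≤ dist x 0 by simpa using hx)]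
  have hHne : ∀ x, H x ≠ 0 := by
    intro x h0
    rcases le_total (9 / 10) ‖x‖ with hx | hx
    · rw [hHout x hx] at h0
      rw [h0, norm_zero] at hx
      norm_num at hx
    have hxB : x ∈ closedBall (0 : Euc n) 1 := by simp; linarith
    rcases le_total ‖x‖ (4 / 5) with hx' | hx'
    · have h1 : χ x = 1 := χ.one_of_mem_closedBall (by simpa using hx')
      have h2 : P x = 0 := by simpa [hH, h1] using h0
      have h3 := (hPF' x hxB).trans_le (min_le_left _ _)
      rw [h2, zero_sub, norm_neg] at h3
      exact (hδF x hxB).not_gt h3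
    · have h1 : ‖x‖ = χ x * ‖P x - x‖ := by
        rw [eq_neg_of_add_eq_zero_left h0, norm_neg, norm_smul, Real.norm_of_nonneg χ.nonneg,
          ← eq_neg_of_add_eq_zero_left h0]
      have h2 := hPx x hxB
      have h3 : χ x * ‖P x - x‖ ≤ ‖P x - x‖ :=
        mul_le_of_le_one_left (norm_nonneg _) χ.le_one
      linarith
  refine no_retraction (R := fun x => ‖H x‖⁻¹ • H x)
    (((hHC.norm ℝ hHne).inv fun x => norm_ne_zero_iff.2 (hHne x)).smul hHC) (fun x => ?_)
    fun x hx => ?_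
  · rw [norm_smul, norm_inv, norm_norm, inv_mul_cancel₀ (norm_ne_zero_iff.2 (hHne x))]
  · have := hHout x (by rw [hx]; norm_num)
    simp [this, hx]

/-! ### Invariance of domain -/

theorem mem_interior_image_closedBall {n : ℕ} {f : Euc n → Euc n}
    (hf : ContinuousOn f (closedBall 0 1)) (hinj : InjOn f (closedBall 0 1)) :
    f 0 ∈ interior (f '' closedBall 0 1) := by
  set B := closedBall (0 : Euc n) 1
  have hBc : IsCompact B := isCompact_closedBall 0 1
  have hKc : IsCompact (f '' B) := hBc.image_of_continuousOn hf
  have h0B : (0 : Euc n) ∈ B := by simp [B]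
  -- `f` restricted to `B` is a closed embedding, so Tietze's theorem extends its inverse to `G`.
  have : CompactSpace B := isCompact_iff_compactSpace.1 hBc
  have he : Topology.IsClosedEmbedding (B.domRestrict f) :=
    (continuousOn_iff_continuous_domRestrict.1 hf).isClosedEmbedding
      (injOn_iff_injective.1 hinj)
  obtain ⟨G, hG⟩ := ContinuousMap.exists_extension' he (⟨Subtype.val, continuous_subtype_val⟩ : C(B, Euc n))
  have hGf : ∀ x ∈ B, G (f x) = x := fun x hx => congrFun hG ⟨x, hx⟩
  by_contra hn
  obtain ⟨r, hr, hGr⟩ := Metric.continuousAt_iff.1 (G.continuous.continuousAt (x := f 0)) (1 / 10)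
    (by norm_num)
  have hGr' : ∀ y, dist y (f 0) < r → ‖G y‖ < 1 / 10 := fun y hy => by
    simpa [hGf 0 h0B] using hGr hy
  obtain ⟨ε, hε, hεr⟩ : ∃ ε > 0, 2 * ε = r := ⟨r / 2, by positivity, by ring⟩
  obtain ⟨c, hc, hcK⟩ : ∃ c, dist c (f 0) < ε ∧ c ∉ f '' B := by
    by_contra! hcon
    exact hn (mem_interior_iff_mem_nhds.2 (Metric.mem_nhds_iff.2 ⟨ε, hε, fun y hy => hcon y hy⟩))
  -- The only zero of `G` on the image is `f 0`, which is closer than `ε` to `c`.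
  have hGne : ∀ y ∈ f '' B ∩ {y | ε ≤ dist y c}, 0 < ‖G y‖ := by
    rintro _ ⟨⟨x, hx, rfl⟩, hy⟩
    rw [hGf x hx, norm_pos_iff]
    rintro rfl
    rw [mem_ofPred_eq, dist_comm] at hy
    exact hy.not_gt hc
  obtain ⟨δ, hδ, hδG⟩ := (hKc.inter_right (isClosed_le continuous_const
    (continuous_id.dist continuous_const))).exists_forall_le' G.continuous.norm.continuousOn hGne
  set m := min δ (1 / 10)
  have hm : 0 < m := by positivity
  obtain ⟨P, hP, hPG, -⟩ := G.continuous.exists_contDiff_approx 1 (ε := fun _ => m / 2)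
    continuous_const fun _ => by positivity
  -- A small translate of `P` avoids zero on the sphere around `c`, since the image of that sphere
  -- under `P` is null. On the part of the image of `f` outside the ball around `c`, the bound `hδG`
  -- keeps the translate nonzero.
  have hnull : volume (P '' sphere c ε) = 0 :=
    addHaar_image_eq_zero_of_differentiableOn_of_addHaar_eq_zero volume
      (hP.differentiable one_ne_zero).differentiableOn
      (Measure.addHaar_sphere_of_ne_zero volume c hε.ne')
  obtain ⟨v, hv, hvP⟩ : ∃ v ∈ ball (0 : Euc n) (m / 2), v ∉ P '' sphere c ε := by
    by_contra! hcon
    exact (measure_ball_pos volume (0 : Euc n) (half_pos hm)).ne' (measure_mono_null hcon hnull)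
  have hQG : ∀ y, ‖P y - v - G y‖ < m := fun y => by
    have h1 := hPG y
    rw [dist_eq_norm] at h1
    have h2 : ‖v‖ < m / 2 := by simpa using hv
    have h3 := norm_sub_le (P y - G y) v
    rw [sub_right_comm] at h3
    linarith
  have hK0 : ∀ y ∈ f '' B, 0 < ‖y - c‖ := fun y hy => norm_pos_iff.2 (sub_ne_zero.2 fun h => hcK (h ▸ hy))
  -- `Φ` pushes the points of the ball around `c` radially to its sphere; this is continuous on the
  -- image of `f` because `c` does not belong to it.
  set Φ : Euc n → Euc n := fun y => c + max (ε / ‖y - c‖) 1 • (y - c) with hΦ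
  have hΦC : ContinuousOn Φ (f '' B) := by
    have hsub : ContinuousOn (fun y => y - c) (f '' B) := by fun_prop
    have hmax : ContinuousOn (fun y => max (ε / ‖y - c‖) 1) (f '' B) :=
      (continuousOn_const.div hsub.norm fun y hy => (hK0 y hy).ne').sup continuousOn_const
    exact continuousOn_const.add (hmax.smul hsub)
  have hΦ1 : ∀ y ∈ f '' B, ε ≤ dist y c → Φ y = y := fun y hy h => by
    rw [dist_eq_norm] at h
    simp [hΦ, max_eq_right ((div_le_one (hK0 y hy)).2 h)]
  have hΦ2 : ∀ y ∈ f '' B, dist y c ≤ ε → Φ y ∈ sphere c ε := fun y hy h => by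
    rw [dist_eq_norm] at h
    have h1 : Φ y - c = (ε / ‖y - c‖) • (y - c) := by
      simp [hΦ, max_eq_left ((one_le_div (hK0 y hy)).2 h)]
    rw [mem_sphere, dist_eq_norm, h1, norm_smul, norm_div, norm_norm, Real.norm_of_nonneg hε.le,
      div_mul_cancel₀ _ (hK0 y hy).ne']
  obtain ⟨x, hx, hx0⟩ := exists_zero_of_near_id (F := fun x => P (Φ (f x)) - v)
    ((hP.continuous.comp_continuousOn (hΦC.comp hf (mapsTo_image f B))).sub continuousOn_const)
    (fun x hx => by
      have hy := mem_image_of_mem f hx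
      have hQ := (hQG (Φ (f x))).trans_le (min_le_right _ _)
      rcases le_total ε (dist (f x) c) with h | h
      · rw [hΦ1 _ hy h] at hQ ⊢
        rw [hGf x hx] at hQ
        linarith
      · have h1 : ‖G (Φ (f x))‖ < 1 / 10 := hGr' _ <| by
          have := dist_triangle (Φ (f x)) c (f 0)
          rw [mem_sphere.1 (hΦ2 _ hy h)] at this
          linarith
        have h2 : ‖x‖ < 1 / 10 := by
          rw [← hGf x hx]
          refine hGr' _ ?_
          have := dist_triangle (f x) c (f 0)
          linarith
        have h3 := norm_sub_le_norm_sub_add_norm_sub (P (Φ (f x)) - v) (G (Φ (f x))) x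
        have h4 := norm_sub_le (G (Φ (f x))) x
        linarith)
  have hy := mem_image_of_mem f hx
  rcases le_total ε (dist (f x) c) with h | h
  · have hx0' : P (f x) - v = 0 := by simpa only [hΦ1 _ hy h] using hx0
    have h1 := (hQG (f x)).trans_le (min_le_left _ _)
    rw [hx0', zero_sub, norm_neg] at h1
    exact (hδG _ ⟨hy, h⟩).not_gt h1
  · exact hvP ⟨_, hΦ2 _ hy h, sub_eq_zero.1 hx0⟩

theorem invariance_of_domain {n : ℕ} {f : Euc n → Euc n} {s : Set (Euc n)} (hf : ContinuousOn f s)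
    (hinj : InjOn f s) {x : Euc n} (hx : x ∈ interior s) : f x ∈ interior (f '' s) := by
  obtain ⟨r, hr, hrs⟩ := Metric.nhds_basis_closedBall.mem_iff.1 (mem_interior_iff_mem_nhds.1 hx)
  set a : Euc n → Euc n := fun y => x + r • y with ha
  have hmaps : MapsTo a (closedBall 0 1) s := fun y hy => hrs <| by
    have : ‖y‖ ≤ 1 := by simpa using hy
    rw [mem_closedBall, dist_eq_norm, ha, add_sub_cancel_left, norm_smul, Real.norm_of_nonneg hr.le]
    exact mul_le_of_le_one_right hr.le this
  have hainj : Function.Injective a := fun y z h =>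
    smul_right_injective _ hr.ne' (add_left_cancel h)
  have h := mem_interior_image_closedBall (f := f ∘ a)
    (hf.comp (by fun_prop) hmaps) (hinj.comp hainj.injOn hmaps)
  have ha0 : (f ∘ a) 0 = f x := by simp [ha]
  rw [ha0] at h
  refine interior_mono ?_ h
  rw [image_comp]
  exact image_mono hmaps.image_subset

theorem invariance_of_domain_pi {n : ℕ} {N : (Fin n → ℝ) → (Fin n → ℝ)} {X : Set (Fin n → ℝ)}
    (hN : ContinuousOn N X) (hinj : InjOn N X) {x : Fin n → ℝ} (hx : x ∈ interior X) :
    N x ∈ interior (N '' X) := by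
  let e : (Fin n → ℝ) ≃ₜ Euc n := (EuclideanSpace.equiv (Fin n) ℝ).symm.toHomeomorph
  have hmaps : MapsTo e.symm (e '' X) X := by
    rintro _ ⟨y, hy, rfl⟩
    simpa using hy
  have h := invariance_of_domain (f := e ∘ N ∘ e.symm) (s := e '' X) (x := e x)
    (e.continuous.comp_continuousOn (hN.comp e.symm.continuous.continuousOn hmaps))
    (e.injective.comp_injOn (hinj.comp e.symm.injective.injOn hmaps))
    (e.image_interior X ▸ mem_image_of_mem e hx)
  have him : (e ∘ N ∘ e.symm) '' (e '' X) = e '' (N '' X) := by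
    simp only [← image_comp]
    exact image_congr fun y _ => by simp
  rw [him, ← e.image_interior] at h
  simpa using h

/-- Set-boundary safety verification for injective continuous networks: if
`N : ℝⁿ → ℝⁿ` is continuous and injective on a compact input set `X_in`, and the
safe set `X_s` has connected unbounded complement, then
`N '' (∂X_in) ⊆ X_s` implies `N '' X_in ⊆ X_s`. -/
theorem safety_verification_invertible
    {n : ℕ} (N : (Fin n → ℝ) → (Fin n → ℝ)) (hN : Continuous N)
    (Xin Xs : Set (Fin n → ℝ)) (hXin : IsCompact Xin)
    (hinj : Set.InjOn N Xin)
    (hconn : IsConnected Xsᶜ) (hunb : ¬ Bornology.IsBounded Xsᶜ)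
    (hbound : N '' frontier Xin ⊆ Xs) :
    N '' Xin ⊆ Xs := by
  have hK : IsCompact (N '' Xin) := hXin.image hN
  have hint : ∀ x ∈ Xin, N x ∉ Xs → N x ∈ interior (N '' Xin) := fun x hx hxs =>
    invariance_of_domain_pi hN.continuousOn hinj <| by
      by_contra hxi
      exact hxs (hbound (mem_image_of_mem N ⟨subset_closure hx, hxi⟩))
  rintro _ ⟨x, hx, rfl⟩
  by_contra hxs
  refine hunb (hK.isBounded.subset (Subset.trans ?_ interior_subset))
  refine hconn.isPreconnected.subset_left_of_subset_union isOpen_interior hK.isClosed.isOpen_compl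
    (disjoint_compl_right.mono_left interior_subset) (fun y hy => ?_) ⟨N x, hxs, hint x hx hxs⟩
  by_cases hyK : y ∈ N '' Xin
  · obtain ⟨z, hz, rfl⟩ := hyK
    exact Or.inl (hint z hz hy)
  · exact Or.inr hyK
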